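/- arXiv:1101.2976 — 8 statements merged into one kernel-verified Lean document; each statement's English description precedes it below -/
import Mathlib

section
/- Let R be a Ψ-ring with operations Ψ^i, let M be a Ψ-module over R with operations ψ^i, and let ε^i : R → M (i ≥ 1) be a family of functions. Define maps Ψ̃^i on the square-zero extension R ⋊ M by Ψ̃^i(r,m) = (Ψ^i(r), ψ^i(m) + ε^i(r)). Then the maps Ψ̃^i make R ⋊ M into a Ψ-ring (i.e. each Ψ̃^i is a ring homomorphism, Ψ̃^1 is the identity, and Ψ̃^i ∘ Ψ̃^j = Ψ̃^{ij} for all i,j ≥ 1) if and only if for all r, s ∈ R and all i, j ≥ 1: (1) ε^1(r) = 0, (2) ε^i(r+s) = ε^i(r) + ε^i(s), (3) ε^i(rs) = Ψ^i(r)·ε^i(s) + ε^i(r)·Ψ^i(s), and (4) ε^{ij}(r) = ψ^i(ε^j(r)) + ε^i(Ψ^j(r)). -/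
/-- Multiplication on the trivial square-zero extension `R ⋊ M`:
`(r,m)(s,n) = (rs, r·n + s·m)`. -/
def sqMul {R M : Type*} [CommRing R] [AddCommGroup M] [Module R M]
    (x y : R × M) : R × M :=
  (x.1 * y.1, x.1 • y.2 + y.1 • x.2)

/-- The candidate operations `Ψ̃^i(r,m) = (Ψ^i(r), ψ^i(m) + ε^i(r))` on `R ⋊ M`. -/
def psiTilde {R M : Type*} [CommRing R] [AddCommGroup M]
    (Ψ : ℕ → R → R) (ψ : ℕ → M → M) (ε : ℕ → R → M) (i : ℕ) (x : R × M) : R × M :=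
  (Ψ i x.1, ψ i x.2 + ε i x.1)

/-!
The `R`-coordinate of every Ψ-ring axiom for `Ψ̃` is the same axiom for `Ψ`. In the `M`-coordinate
the terms in `m` satisfy the corresponding Ψ-module axiom, so cancelling them leaves exactly the
condition on `ε`. The axiom `Ψ̃^i(1, 0) = (1, 0)` leaves `ε^i(1) = 0`, which follows from the
Leibniz rule (3) at `1 * 1`.
-/

/-- The map `(r, m) ↦ (f r, φ m + e r)` underlying a morphism `R ⋊ M → S ⋊ N` of square-zero
extensions. The maps are plain functions, so that the condition which each Ψ-ring axiom puts on `e`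
can be read off separately. -/
def sqZeroMap {R S M N : Type*} [Add N] (f : R → S) (φ : M → N) (e : R → N) (x : R × M) : S × N :=
  (f x.1, φ x.2 + e x.1)

theorem psiTilde_eq_sqZeroMap {R M : Type*} [CommRing R] [AddCommGroup M]
    (Ψ : ℕ → R → R) (ψ : ℕ → M → M) (ε : ℕ → R → M) (i : ℕ) :
    psiTilde Ψ ψ ε i = sqZeroMap (Ψ i) (ψ i) (ε i) :=
  rfl

namespace sqZeroMap

theorem map_add_iff {R S M N : Type*} [Add R] [Add S] [Add M] [AddCancelCommMonoid N]
    {f : R → S} {φ : M → N} {e : R → N}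
    (hf : ∀ r s, f (r + s) = f r + f s) (hφ : ∀ m n, φ (m + n) = φ m + φ n) (x y : R × M) :
    sqZeroMap f φ e (x + y) = sqZeroMap f φ e x + sqZeroMap f φ e y ↔
      e (x.1 + y.1) = e x.1 + e y.1 := by
  simp only [sqZeroMap, Prod.ext_iff, Prod.fst_add, Prod.snd_add, hf, hφ, true_and]
  rw [add_add_add_comm, add_right_inj]

theorem map_sqMul_iff {R S M N : Type*} [CommRing R] [CommRing S] [AddCommGroup M]
    [AddCommGroup N] [Module R M] [Module S N] {f : R → S} {φ : M → N} {e : R → N}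
    (hf : ∀ r s, f (r * s) = f r * f s) (hφ : ∀ m n, φ (m + n) = φ m + φ n)
    (hsmul : ∀ (r : R) (m : M), φ (r • m) = f r • φ m) (x y : R × M) :
    sqZeroMap f φ e (sqMul x y) = sqMul (sqZeroMap f φ e x) (sqZeroMap f φ e y) ↔
      e (x.1 * y.1) = f x.1 • e y.1 + f y.1 • e x.1 := by
  simp only [sqZeroMap, sqMul, Prod.ext_iff, hf, hφ, hsmul, smul_add, true_and]
  rw [add_add_add_comm, add_right_inj]

theorem map_one_iff {R S M N : Type*} [One R] [One S] [Zero M] [AddZeroClass N]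
    {f : R → S} {φ : M → N} {e : R → N} (hf : f 1 = 1) (hφ : φ 0 = 0) :
    sqZeroMap f φ e (1, 0) = (1, 0) ↔ e 1 = 0 := by
  simp only [sqZeroMap, Prod.mk.injEq, hf, hφ, zero_add, true_and]

theorem apply_eq_self_iff {R M : Type*} [AddLeftCancelMonoid M]
    {f : R → R} {φ : M → M} {e : R → M}
    (hf : ∀ r, f r = r) (hφ : ∀ m, φ m = m) (x : R × M) :
    sqZeroMap f φ e x = x ↔ e x.1 = 0 := by
  simp only [sqZeroMap, Prod.ext_iff, hf, hφ, add_eq_left, true_and]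

theorem comp_apply_eq_iff {R S T M N P : Type*} [Add N] [AddLeftCancelSemigroup P]
    {f : R → S} {g : S → T} {h : R → T} {φ : M → N} {γ : N → P} {η : M → P}
    {e : R → N} {d : S → P} {c : R → P}
    (hgf : ∀ r, g (f r) = h r) (hγ : ∀ m n, γ (m + n) = γ m + γ n)
    (hγφ : ∀ m, γ (φ m) = η m) (x : R × M) :
    sqZeroMap g γ d (sqZeroMap f φ e x) = sqZeroMap h η c x ↔
      c x.1 = γ (e x.1) + d (f x.1) := by
  simp only [sqZeroMap, Prod.ext_iff, hgf, hγ, hγφ, add_assoc, add_right_inj, true_and]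
  exact eq_comm

end sqZeroMap

theorem map_one_eq_zero_of_leibniz {R S N : Type*} [MulOneClass R] [Monoid S]
    [AddLeftCancelMonoid N] [MulAction S N] {f : R → S} {e : R → N} (hf : f 1 = 1)
    (he : ∀ r s, e (r * s) = f r • e s + f s • e r) : e 1 = 0 := by
  have h : e 1 = e 1 + e 1 := by simpa only [mul_one, hf, one_smul] using he 1 1
  exact left_eq_add.mp h

theorem stmt0 {R M : Type*} [CommRing R] [AddCommGroup M] [Module R M]
    (Ψ : ℕ → R → R) (ψ : ℕ → M → M) (ε : ℕ → R → M)
    -- `R` is a Ψ-ring: each `Ψ^i` (i ≥ 1) is a ring homomorphism, `Ψ^1 = id`,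
    -- and `Ψ^i ∘ Ψ^j = Ψ^{ij}`.
    (hΨadd : ∀ i, 1 ≤ i → ∀ r s : R, Ψ i (r + s) = Ψ i r + Ψ i s)
    (hΨmul : ∀ i, 1 ≤ i → ∀ r s : R, Ψ i (r * s) = Ψ i r * Ψ i s)
    (hΨone : ∀ i, 1 ≤ i → Ψ i 1 = 1)
    (hΨ1 : ∀ r : R, Ψ 1 r = r)
    (hΨcomp : ∀ i, 1 ≤ i → ∀ j, 1 ≤ j → ∀ r : R, Ψ i (Ψ j r) = Ψ (i * j) r)
    -- `M` is a Ψ-module over `R`.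
    (hψadd : ∀ i, 1 ≤ i → ∀ m n : M, ψ i (m + n) = ψ i m + ψ i n)
    (hψ1 : ∀ m : M, ψ 1 m = m)
    (hψsmul : ∀ i, 1 ≤ i → ∀ (r : R) (m : M), ψ i (r • m) = Ψ i r • ψ i m)
    (hψcomp : ∀ i, 1 ≤ i → ∀ j, 1 ≤ j → ∀ m : M, ψ i (ψ j m) = ψ (i * j) m) :
    -- The maps `Ψ̃^i` make `R ⋊ M` into a Ψ-ring …
    ((∀ i, 1 ≤ i →
        (∀ x y : R × M, psiTilde Ψ ψ ε i (x + y) = psiTilde Ψ ψ ε i x + psiTilde Ψ ψ ε i y) ∧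
        (∀ x y : R × M,
          psiTilde Ψ ψ ε i (sqMul x y) = sqMul (psiTilde Ψ ψ ε i x) (psiTilde Ψ ψ ε i y)) ∧
        psiTilde Ψ ψ ε i ((1 : R), (0 : M)) = ((1 : R), (0 : M))) ∧
      (∀ x : R × M, psiTilde Ψ ψ ε 1 x = x) ∧
      (∀ i, 1 ≤ i → ∀ j, 1 ≤ j → ∀ x : R × M,
        psiTilde Ψ ψ ε i (psiTilde Ψ ψ ε j x) = psiTilde Ψ ψ ε (i * j) x))
    ↔
    -- … if and only if conditions (1)–(4) hold.
    ((∀ r : R, ε 1 r = 0) ∧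
      (∀ i, 1 ≤ i → ∀ r s : R, ε i (r + s) = ε i r + ε i s) ∧
      (∀ i, 1 ≤ i → ∀ r s : R, ε i (r * s) = Ψ i r • ε i s + Ψ i s • ε i r) ∧
      (∀ i, 1 ≤ i → ∀ j, 1 ≤ j → ∀ r : R, ε (i * j) r = ψ i (ε j r) + ε i (Ψ j r))) := by
  simp only [psiTilde_eq_sqZeroMap]
  have psi_zero i (hi : 1 ≤ i) : ψ i 0 = 0 := (AddMonoidHom.mk' (ψ i) (hψadd i hi)).map_zero
  have add_iff i (hi : 1 ≤ i) := sqZeroMap.map_add_iff (e := ε i) (hΨadd i hi) (hψadd i hi)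
  have mul_iff i (hi : 1 ≤ i) :=
    sqZeroMap.map_sqMul_iff (e := ε i) (hΨmul i hi) (hψadd i hi) (hψsmul i hi)
  have one_iff i (hi : 1 ≤ i) := sqZeroMap.map_one_iff (e := ε i) (hΨone i hi) (psi_zero i hi)
  have id_iff := sqZeroMap.apply_eq_self_iff (e := ε 1) hΨ1 hψ1
  have comp_iff i (hi : 1 ≤ i) j (hj : 1 ≤ j) :=
    sqZeroMap.comp_apply_eq_iff (e := ε j) (d := ε i) (c := ε (i * j))
      (hΨcomp i hi j hj) (hψadd i hi) (hψcomp i hi j hj)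
  constructor
  · rintro ⟨hom, tilde_one, comp⟩
    exact ⟨fun r => (id_iff (r, 0)).mp (tilde_one _),
      fun i hi r s => (add_iff i hi (r, 0) (s, 0)).mp ((hom i hi).1 _ _),
      fun i hi r s => (mul_iff i hi (r, 0) (s, 0)).mp ((hom i hi).2.1 _ _),
      fun i hi j hj r => (comp_iff i hi j hj (r, 0)).mp (comp i hi j hj _)⟩
  · rintro ⟨eps_one, eps_add, leibniz, cocycle⟩
    exact ⟨fun i hi => ⟨fun x y => (add_iff i hi x y).mpr (eps_add i hi _ _),
        fun x y => (mul_iff i hi x y).mpr (leibniz i hi _ _),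
        (one_iff i hi).mpr (map_one_eq_zero_of_leibniz (hΨone i hi) (leibniz i hi))⟩,
      fun x => (id_iff x).mpr (eps_one _),
      fun i hi j hj x => (comp_iff i hi j hj x).mpr (cocycle i hi j hj _)⟩
end

section
/- Let R be a commutative ring with identity equipped with operations λ^i : R → R (i ≥ 0) satisfying λ^0(r) = 1 and λ^1(r) = r, let Ψ^ν : R → R (ν ≥ 1) be the Adams operations defined recursively by the Newton formula Ψ^ν(r) = Σ_{i=1}^{ν−1} (−1)^{i+1} λ^i(r) Ψ^{ν−i}(r) + (−1)^{ν+1} ν λ^ν(r), let M be an R-module, and let Λ^i : M → M (i ≥ 1) be additive group homomorphisms with Λ^1(m) = m and Λ^i(r·m) = Ψ^i(r)·Λ^i(m). For r ∈ R and m ∈ M set χ_i(r,m) = Σ_{j=1}^{i} Λ^j(m)·λ^{i−j}(r) (with λ^0(r) = 1). Then for every r ∈ R, m ∈ M and every ν ≥ 2, Σ_{i=1}^{ν−1} [ (−1)^{i+1} χ_i(r,m)·Ψ^{ν−i}(r) + (−1)^{ν+1} i λ^i(r)·Λ^{ν−i}(m) ] = 0. -/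
/-! Expand every `χ_i` and collect the terms containing a fixed `Λ^j(m)`. The coefficient coming
from the first summands is, up to sign, the sum in the Newton identity of degree `ν - j`; it
therefore equals `(-1)^ν (ν - j) λ^{ν-j}(r)`, which cancels the coefficient coming from the second
summands. -/

open Finset

/-- The element `χ_i = Σ_{j=1}^{i} e_{i-j} x_j` attached to sequences of scalars `e` and of vectors
`x`; the paper's `χ_i(r, m)` has `e_k = λ^k(r)` and `x_j = Λ^j(m)`. -/
def chi {R M : Type*} [Semiring R] [AddCommMonoid M] [Module R M]
    (e : ℕ → R) (x : ℕ → M) (i : ℕ) : M :=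
  ∑ j ∈ Icc 1 i, e (i - j) • x j

/-- Newton's identities, with `e` as elementary symmetric functions and `p` as power sums, in the
form of `MvPolynomial.mul_esymm_eq_sum`. They relate the `λ^k(r)` to the Adams operations
`Ψ^k(r)`; moving `p n` into the sum, as its term `k = 0`, makes the case `n = 0` read `0 = 0`. -/
def NewtonIdentities {R : Type*} [CommRing R] (e p : ℕ → R) : Prop :=
  ∀ n : ℕ, (n : R) * e n = (-1) ^ (n + 1) * ∑ k ∈ range n, (-1) ^ k * e k * p (n - k)

theorem sum_Ico_smul_chi {R M : Type*} [Semiring R] [AddCommMonoid M] [Module R M]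
    (a e : ℕ → R) (x : ℕ → M) (n : ℕ) :
    ∑ i ∈ Ico 1 n, a i • chi e x i =
      ∑ j ∈ Ico 1 n, (∑ i ∈ Ico j n, a i * e (i - j)) • x j := by
  simp only [chi, smul_sum, sum_smul, smul_smul]
  refine sum_comm' fun i j ↦ ?_
  simp only [mem_Ico, mem_Icc]
  omega

section NewtonIdentities

variable {R : Type*} [CommRing R] {e p : ℕ → R}

theorem newtonIdentities_of_recursion (he : e 0 = 1)
    (hp : ∀ n, 1 ≤ n → p n =
      (∑ i ∈ Ico 1 n, (-1) ^ (i + 1) * e i * p (n - i)) + (-1) ^ (n + 1) * (n : R) * e n) :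
    NewtonIdentities e p := by
  intro n
  rcases Nat.eq_zero_or_pos n with rfl | hn
  · simp
  have split_first : ∑ k ∈ range n, (-1) ^ k * e k * p (n - k) =
      p n - ∑ i ∈ Ico 1 n, (-1) ^ (i + 1) * e i * p (n - i) := by
    rw [range_eq_Ico, sum_eq_sum_Ico_succ_bot hn, he]
    simp [pow_succ]
  have sign_sq : (-1 : R) ^ (n + 1) * (-1) ^ (n + 1) = 1 := by
    rw [← mul_pow, neg_one_mul, neg_neg, one_pow]
  rw [split_first]
  linear_combination -(-1) ^ (n + 1) * hp n hn - n * e n * sign_sq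

theorem NewtonIdentities.sum_Ico_mul (h : NewtonIdentities e p) {j n : ℕ} (hj : j ≤ n) :
    ∑ i ∈ Ico j n, (-1) ^ (i + 1) * p (n - i) * e (i - j) =
      (-1) ^ n * ((n - j : ℕ) : R) * e (n - j) := by
  obtain ⟨d, rfl⟩ := Nat.exists_eq_add_of_le hj
  have shift : ∑ i ∈ Ico j (j + d), (-1) ^ (i + 1) * p (j + d - i) * e (i - j) =
      (-1) ^ (j + 1) * ∑ k ∈ range d, (-1) ^ k * e k * p (d - k) := by
    rw [sum_Ico_eq_sum_range, add_tsub_cancel_left, mul_sum]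
    refine sum_congr rfl fun k _ ↦ ?_
    rw [Nat.add_sub_add_left, add_tsub_cancel_left]
    ring
  have sign : (-1 : R) ^ (j + d) * (-1) ^ (d + 1) = (-1) ^ (j + 1) := by
    rw [← pow_add, show j + d + (d + 1) = j + 1 + 2 * d by ring, pow_add _ (j + 1),
      Even.neg_one_pow (even_two_mul d), mul_one]
  rw [shift, add_tsub_cancel_left, mul_assoc, h d, ← mul_assoc, sign]

end NewtonIdentities

theorem stmt3_general {R M : Type*} [CommRing R] [AddCommGroup M] [Module R M]
    {e p : ℕ → R} (h : NewtonIdentities e p) (x : ℕ → M) (n : ℕ) :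
    ∑ i ∈ Ico 1 n, (((-1 : R) ^ (i + 1) * p (n - i)) • chi e x i +
      ((-1 : R) ^ (n + 1) * (i : R) * e i) • x (n - i)) = 0 := by
  have first : ∑ i ∈ Ico 1 n, ((-1 : R) ^ (i + 1) * p (n - i)) • chi e x i =
      ∑ j ∈ Ico 1 n, ((-1 : R) ^ n * ((n - j : ℕ) : R) * e (n - j)) • x j := by
    rw [sum_Ico_smul_chi]
    exact sum_congr rfl fun j hj ↦ by rw [h.sum_Ico_mul (mem_Ico.mp hj).2.le]
  have second : ∑ i ∈ Ico 1 n, ((-1 : R) ^ n * (i : R) * e i) • x (n - i) =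
      ∑ j ∈ Ico 1 n, ((-1 : R) ^ n * ((n - j : ℕ) : R) * e (n - j)) • x j := by
    have reflect := sum_Ico_reflect
      (fun i ↦ ((-1 : R) ^ n * (i : R) * e i) • x (n - i)) 1 n.le_succ
    rw [Nat.add_sub_cancel_left, Nat.add_sub_cancel] at reflect
    rw [← reflect]
    exact sum_congr rfl fun j hj ↦ by rw [Nat.sub_sub_self (mem_Ico.mp hj).2.le]
  simp only [pow_succ _ n, mul_neg_one, neg_mul, neg_smul]
  rw [sum_add_distrib, sum_neg_distrib, second, ← first, add_neg_cancel]

theorem stmt3 {R M : Type*} [CommRing R] [AddCommGroup M] [Module R M]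
    (lam : ℕ → R → R) (Ψ : ℕ → R → R) (Λ : ℕ → M → M)
    (hlam0 : ∀ r : R, lam 0 r = 1)
    (hlam1 : ∀ r : R, lam 1 r = r)
    -- The Adams operations are defined recursively by the Newton formula.
    (hNewton : ∀ ν, 1 ≤ ν → ∀ r : R, Ψ ν r =
      (∑ i ∈ Finset.Ico 1 ν, (-1 : R) ^ (i + 1) * lam i r * Ψ (ν - i) r) +
        (-1 : R) ^ (ν + 1) * (ν : R) * lam ν r)
    (hΛadd : ∀ i, 1 ≤ i → ∀ m m' : M, Λ i (m + m') = Λ i m + Λ i m')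
    (hΛ1 : ∀ m : M, Λ 1 m = m)
    (hΛsmul : ∀ i, 1 ≤ i → ∀ (r : R) (m : M), Λ i (r • m) = Ψ i r • Λ i m) :
    -- with `χ_i(r,m) = Σ_{j=1}^{i} Λ^j(m)·λ^{i−j}(r)`:
    ∀ ν, 2 ≤ ν → ∀ (r : R) (m : M),
      ∑ i ∈ Finset.Ico 1 ν,
        (((-1 : R) ^ (i + 1) * Ψ (ν - i) r) •
            (∑ j ∈ Finset.Icc 1 i, lam (i - j) r • Λ j m) +
          ((-1 : R) ^ (ν + 1) * (i : R) * lam i r) • Λ (ν - i) m) = 0 := by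
  intro ν _ r m
  exact stmt3_general (newtonIdentities_of_recursion (hlam0 r) fun n hn ↦ hNewton n hn r)
    (fun j ↦ Λ j m) ν
end

section
/- Let R be a pre-λ-ring with operations λ^i, let Ψ^ν : R → R (ν ≥ 1) be the Adams operations defined by the Newton formula, let M be an R-module, and let Λ^i : M → M (i ≥ 1) be additive group homomorphisms with Λ^1(m) = m and Λ^i(r·m) = Ψ^i(r)·Λ^i(m). Suppose d : R → M is an additive homomorphism satisfying d(rs) = r·d(s) + d(r)·s and d(λ^i(r)) = Σ_{j=1}^{i} Λ^j(d(r))·λ^{i−j}(r) for all r,s ∈ R and i ≥ 1 (i.e. d is a λ-derivation). Then d(Ψ^ν(r)) = (−1)^{ν+1} ν Λ^ν(d(r)) for all r ∈ R and ν ≥ 1; that is, every λ-derivation is a Ψ-derivation with respect to the Adams operations ψ^ν = (−1)^{ν+1} ν Λ^ν on M. -/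
/-!
With `λ_t(r) = ∑ λⁱ(r) tⁱ`, Newton's formula says that `∑ (-1)ⁿ Ψⁿ⁺¹(r) tⁿ` is the logarithmic
derivative of `λ_t(r)`. A derivation `d : R → M` is the same thing as the ring homomorphism
`φ = id + ε d` into the square-zero extension `R ⊕ ε M`, and the λ-derivation property reads
`φ(λ_t(r)) = λ_t(r) * (1 + ε ∑ Λʲ(d r) tʲ)`. Logarithmic derivatives turn products into sums, and
that of `1 + ε e` is `ε e'`, so comparing the `ε`-parts of the logarithmic derivatives of both sides
gives `(-1)ⁿ d(Ψⁿ⁺¹(r)) = (n + 1) Λⁿ⁺¹(d r)`.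
-/

open Finset.HasAntidiagonal (antidiagonal)

section LogDeriv

variable {k A : Type*} [CommSemiring k] [CommSemiring A] [Algebra k A] {δ : Derivation k A A}
  {f g p q : A}

/-- `p` is a logarithmic derivative of `f` for the derivation `δ`. The equation `δ f / f = p` is
stated without division, so that `f` need not be invertible. -/
def IsLogDeriv (δ : Derivation k A A) (f p : A) : Prop :=
  δ f = f * p

theorem IsLogDeriv.mul (hf : IsLogDeriv δ f p) (hg : IsLogDeriv δ g q) :
    IsLogDeriv δ (f * g) (p + q) := by
  simp only [IsLogDeriv, Derivation.leibniz, smul_eq_mul] at *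
  rw [hf, hg]
  ring

theorem IsLogDeriv.unique (hu : IsUnit f) (hp : IsLogDeriv δ f p) (hq : IsLogDeriv δ f q) :
    p = q :=
  hu.mul_left_cancel (hp.symm.trans hq)

theorem IsLogDeriv.one_add (h : f * δ f = 0) : IsLogDeriv δ (1 + f) (δ f) := by
  rw [IsLogDeriv, map_add, δ.map_one_eq_zero, zero_add, one_add_mul, h, add_zero]

end LogDeriv

section PowerSeries

open PowerSeries

theorem derivative_map {R S : Type*} [CommSemiring R] [CommSemiring S] (φ : R →+* S) (f : R⟦X⟧) :
    d⁄dX S (map φ f) = map φ (d⁄dX R f) := by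
  ext n
  simp only [coeff_derivative, coeff_map, map_mul, map_add, map_natCast, map_one]

theorem IsLogDeriv.map {R S : Type*} [CommSemiring R] [CommSemiring S] {f p : R⟦X⟧}
    (h : IsLogDeriv (d⁄dX R) f p) (φ : R →+* S) :
    IsLogDeriv (d⁄dX S) (map φ f) (map φ p) := by
  rw [IsLogDeriv, derivative_map, h, map_mul]

theorem isLogDeriv_of_newton {R : Type*} [CommRing R] {l ψ : ℕ → R} (hl0 : l 0 = 1)
    (hNewton : ∀ ν, 1 ≤ ν → ψ ν =
      (∑ i ∈ Finset.Ico 1 ν, (-1) ^ (i + 1) * l i * ψ (ν - i)) + (-1) ^ (ν + 1) * ν * l ν) :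
    IsLogDeriv (d⁄dX R) (mk l) (mk fun n => (-1 : ℤ) ^ n • ψ (n + 1)) := by
  ext n
  simp only [coeff_derivative, coeff_mul, coeff_mk, zsmul_eq_mul, Int.cast_pow, Int.cast_neg,
    Int.cast_one]
  rw [Finset.Nat.sum_antidiagonal_eq_sum_range_succ fun i j => l i * ((-1) ^ j * ψ (j + 1)),
    Finset.sum_range_succ', tsub_zero, hNewton (n + 1) n.succ_pos, Finset.sum_Ico_eq_sum_range]
  have hterm : ∀ i ∈ Finset.range n,
      l (i + 1) * ((-1) ^ (n - (i + 1)) * ψ (n - (i + 1) + 1)) =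
        -((-1) ^ n * ((-1) ^ (1 + i + 1) * l (1 + i) * ψ (n + 1 - (1 + i)))) := by
    intro i hi
    obtain ⟨j, rfl⟩ := Nat.exists_eq_add_of_lt (Finset.mem_range.1 hi)
    have hsign : (-1 : R) ^ (i + j + 1) * (-1) ^ (1 + i + 1) = -(-1) ^ j := by
      rw [← pow_add, show i + j + 1 + (1 + i + 1) = 2 * (i + 1) + (j + 1) by ring, pow_add,
        pow_mul, neg_one_sq, one_pow, one_mul, pow_succ, mul_neg_one]
    rw [show i + j + 1 - (i + 1) = j by omega, show i + j + 1 + 1 - (1 + i) = j + 1 by omega,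
      add_comm i 1]
    linear_combination l (1 + i) * ψ (j + 1) * hsign
  have hsq : (-1 : R) ^ n * (-1) ^ n = 1 := pow_mul_pow_eq_one n (by simp)
  rw [Finset.sum_congr rfl hterm, Finset.sum_neg_distrib, ← Finset.mul_sum, hl0]
  simp only [add_tsub_cancel_right, Nat.cast_add, Nat.cast_one]
  linear_combination -((n : R) + 1) * l (n + 1) * hsq

end PowerSeries

section SquareZero

open PowerSeries TrivSqZeroExt

variable {k R M : Type*} [CommSemiring k] [CommSemiring R] [Algebra k R] [AddCommMonoid M]
  [Module k M] [Module R M]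

/-- The ring homomorphism `r ↦ r + ε D r` into the square-zero extension `R ⊕ ε M` attached to a
derivation `D : R → M`. -/
@[simps]
def derivationRingHom [Module Rᵐᵒᵖ M] [IsCentralScalar R M] (D : Derivation k R M) :
    R →+* TrivSqZeroExt R M where
  toFun r := inl r + inr (D r)
  map_one' := by simp
  map_mul' r s := by ext <;> simp
  map_zero' := by simp
  map_add' r s := by ext <;> simp

theorem mk_inr_mul_mk_inr [Module Rᵐᵒᵖ M] [IsCentralScalar R M] (m m' : ℕ → M) :
    (mk fun n => (inr (m n) : TrivSqZeroExt R M)) * mk (fun n => inr (m' n)) = 0 := by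
  ext1 n
  simp only [coeff_mul, coeff_mk, inr_mul_inr, Finset.sum_const_zero, map_zero]

theorem derivative_mk_inr [Module Rᵐᵒᵖ M] [IsCentralScalar R M] (m : ℕ → M) :
    d⁄dX (TrivSqZeroExt R M) (mk fun n => inr (m n)) =
      mk fun n => inr ((n + 1) • m (n + 1)) := by
  ext1 n
  rw [coeff_derivative, coeff_mk, coeff_mk, ← Nat.cast_succ, mul_comm, ← nsmul_eq_mul, inr_smul]

theorem map_derivationRingHom_eq_mul_one_add [Module Rᵐᵒᵖ M] [IsCentralScalar R M]
    {D : Derivation k R M} {f : R⟦X⟧} {m : ℕ → M}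
    (hD : ∀ n, D (coeff n f) = ∑ x ∈ antidiagonal n, coeff x.1 f • m x.2) :
    map (derivationRingHom D) f = map (inlHom R M) f * (1 + mk fun n => inr (m n)) := by
  ext1 n
  simp only [mul_one_add, map_add, coeff_map, coeff_mul, coeff_mk, derivationRingHom_apply,
    inlHom_apply, inl_mul_inr, hD, inr_sum]

theorem derivation_coeff_of_isLogDeriv {D : Derivation k R M} {f p : R⟦X⟧} {m : ℕ → M}
    (hf : IsUnit f) (hp : IsLogDeriv (d⁄dX R) f p)
    (hD : ∀ n, D (coeff n f) = ∑ x ∈ antidiagonal n, coeff x.1 f • m x.2) (n : ℕ) :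
    D (coeff n p) = (n + 1) • m (n + 1) := by
  let _ : Module Rᵐᵒᵖ M := Module.compHom M ((RingHom.id R).fromOpposite mul_comm)
  have : IsCentralScalar R M := ⟨fun _ _ => rfl⟩
  let e : (TrivSqZeroExt R M)⟦X⟧ := mk fun n => inr (m n)
  have he : IsLogDeriv (d⁄dX _) (1 + e) (d⁄dX _ e) :=
    .one_add (by rw [derivative_mk_inr, mk_inr_mul_mk_inr])
  have hprod : IsLogDeriv (d⁄dX _) (map (derivationRingHom D) f)
      (map (inlHom R M) p + d⁄dX _ e) := by
    rw [map_derivationRingHom_eq_mul_one_add hD]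
    exact (hp.map _).mul he
  have hseries : map (derivationRingHom D) p = map (inlHom R M) p + d⁄dX _ e :=
    (hp.map _).unique (hf.map _) hprod
  simpa only [e, derivative_mk_inr, coeff_map, map_add, coeff_mk, derivationRingHom_apply,
    inlHom_apply, snd_add, snd_inl, snd_inr, zero_add]
    using congrArg (fun s => (coeff n s).snd) hseries

end SquareZero

theorem sum_antidiagonal_smul_update_zero {R M : Type*} [Semiring R] [AddCommMonoid M] [Module R M]
    (l : ℕ → R) (m : ℕ → M) (n : ℕ) :
    ∑ x ∈ antidiagonal n, l x.1 • Function.update m 0 0 x.2 =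
      ∑ j ∈ Finset.Icc 1 n, l (n - j) • m j := by
  rw [← Finset.Nat.sum_antidiagonal_swap]
  simp only [Prod.fst_swap, Prod.snd_swap]
  rw [Finset.Nat.sum_antidiagonal_eq_sum_range_succ fun j i => l i • Function.update m 0 0 j,
    Finset.sum_range_succ', Function.update_self, smul_zero, add_zero,
    ← Finset.Ico_add_one_right_eq_Icc, Finset.sum_Ico_eq_sum_range, add_tsub_cancel_right]
  simp only [Function.update_of_ne (Nat.succ_ne_zero _), add_comm 1]

theorem stmt4_general {k R M : Type*} [CommSemiring k] [CommRing R] [Algebra k R]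
    [AddCommGroup M] [Module k M] [Module R M] (D : Derivation k R M) {l ψ : ℕ → R} {m : ℕ → M}
    (hl0 : l 0 = 1)
    (hNewton : ∀ ν, 1 ≤ ν → ψ ν =
      (∑ i ∈ Finset.Ico 1 ν, (-1) ^ (i + 1) * l i * ψ (ν - i)) + (-1) ^ (ν + 1) * ν * l ν)
    (hD : ∀ i, 1 ≤ i → D (l i) = ∑ j ∈ Finset.Icc 1 i, l (i - j) • m j) (ν : ℕ) (hν : 1 ≤ ν) :
    D (ψ ν) = ((-1 : ℤ) ^ (ν + 1) * (ν : ℤ)) • m ν := by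
  obtain ⟨n, rfl⟩ := Nat.exists_eq_add_of_le' hν
  have hunit : IsUnit (PowerSeries.mk l) := by
    simp [PowerSeries.isUnit_iff_constantCoeff, hl0]
  -- In degree `0` the convolution formula reads `D 1 = 0`, so `m 0` has to be replaced by `0`.
  have hconv (i : ℕ) : D (l i) =
      ∑ x ∈ antidiagonal i, l x.1 • Function.update m 0 0 x.2 := by
    rw [sum_antidiagonal_smul_update_zero]
    rcases i.eq_zero_or_pos with rfl | hi
    · simp [hl0]
    · exact hD i hi
  have hcoeff : (-1 : ℤ) ^ n • D (ψ (n + 1)) = (n + 1) • m (n + 1) := by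
    rw [← map_zsmul, ← Function.update_of_ne n.succ_ne_zero 0 m]
    simpa only [PowerSeries.coeff_mk] using
      derivation_coeff_of_isLogDeriv hunit (isLogDeriv_of_newton hl0 hNewton)
        (by simpa only [PowerSeries.coeff_mk] using hconv) n
  calc D (ψ (n + 1)) = (-1 : ℤ) ^ n • (-1 : ℤ) ^ n • D (ψ (n + 1)) := by
        rw [smul_smul, pow_mul_pow_eq_one n (by simp), one_smul]
    _ = ((-1 : ℤ) ^ (n + 1 + 1) * ((n + 1 : ℕ) : ℤ)) • m (n + 1) := by
        rw [hcoeff, ← natCast_zsmul, smul_smul, pow_succ, pow_succ, mul_neg_one, mul_neg_one,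
          neg_neg]

theorem stmt4 {R M : Type*} [CommRing R] [AddCommGroup M] [Module R M]
    (lam : ℕ → R → R) (Ψ : ℕ → R → R) (Λ : ℕ → M → M) (d : R → M)
    -- `R` is a pre-λ-ring.
    (hlam0 : ∀ r : R, lam 0 r = 1)
    (hlam1 : ∀ r : R, lam 1 r = r)
    (hlamAdd : ∀ i, ∀ r s : R,
      lam i (r + s) = ∑ k ∈ Finset.range (i + 1), lam k r * lam (i - k) s)
    -- The Adams operations are defined recursively by the Newton formula.
    (hNewton : ∀ ν, 1 ≤ ν → ∀ r : R, Ψ ν r =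
      (∑ i ∈ Finset.Ico 1 ν, (-1 : R) ^ (i + 1) * lam i r * Ψ (ν - i) r) +
        (-1 : R) ^ (ν + 1) * (ν : R) * lam ν r)
    (hΛadd : ∀ i, 1 ≤ i → ∀ m m' : M, Λ i (m + m') = Λ i m + Λ i m')
    (hΛ1 : ∀ m : M, Λ 1 m = m)
    (hΛsmul : ∀ i, 1 ≤ i → ∀ (r : R) (m : M), Λ i (r • m) = Ψ i r • Λ i m)
    -- `d` is a λ-derivation.
    (hdadd : ∀ r s : R, d (r + s) = d r + d s)
    (hdmul : ∀ r s : R, d (r * s) = r • d s + s • d r)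
    (hdlam : ∀ i, 1 ≤ i → ∀ r : R,
      d (lam i r) = ∑ j ∈ Finset.Icc 1 i, lam (i - j) r • Λ j (d r)) :
    -- Then `d` is a Ψ-derivation with respect to the Adams operations
    -- `ψ^ν = (−1)^{ν+1} ν Λ^ν` on `M`.
    ∀ ν, 1 ≤ ν → ∀ r : R,
      d (Ψ ν r) = ((-1 : ℤ) ^ (ν + 1) * (ν : ℤ)) • Λ ν (d r) :=
  fun ν hν r => stmt4_general (.mk' (AddMonoidHom.mk' d hdadd).toIntLinearMap hdmul) (hlam0 r)
    (fun n hn => hNewton n hn r) (fun i hi => hdlam i hi r) ν hν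
end

section
/- Let R be a pre-λ-ring with operations λ^i, let Ψ^ν : R → R (ν ≥ 1) be the Adams operations defined by the Newton formula, let M be an R-module that is ℤ-torsion-free (n·m = 0 with n ≥ 1 implies m = 0), and let Λ^i : M → M (i ≥ 1) be additive group homomorphisms with Λ^1(m) = m and Λ^i(r·m) = Ψ^i(r)·Λ^i(m). Suppose d : R → M is an additive homomorphism satisfying d(rs) = r·d(s) + d(r)·s and d(Ψ^ν(r)) = (−1)^{ν+1} ν Λ^ν(d(r)) for all r,s ∈ R and ν ≥ 1. Then d(λ^ν(r)) = Σ_{i=1}^{ν} Λ^i(d(r))·λ^{ν−i}(r) for all r ∈ R and ν ≥ 1; that is, when M is ℤ-torsion-free every Ψ-derivation is a λ-derivation. -/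
/-! Put `λ_t = ∑ λⁿ(r) tⁿ`, `P = ∑_{j ≥ 1} (-1)^{j+1} Ψʲ(r) tʲ` and `L = ∑_{i ≥ 1} Λⁱ(d r) tⁱ`.
The Newton formula says `t λ_t' = P λ_t`, and `d` being a Ψ-derivation says `d P = t L'`.
Hence `d λ_t` and `λ_t L` both solve `t u' = P u + λ_t · t L'`, and both have constant term zero.
Comparing coefficients of `tⁿ`, this equation expresses `n • uₙ` through earlier coefficients
(as `P` has no constant term), so its solution is unique when `M` is torsion-free. -/

theorem isAddTorsionFree_of_nsmul_eq_zero {M : Type*} [AddCommGroup M]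
    (h : ∀ (n : ℕ) (m : M), 1 ≤ n → n • m = 0 → m = 0) : IsAddTorsionFree M where
  nsmul_right_injective n hn :=
    (injective_iff_map_eq_zero (nsmulAddMonoidHom (α := M) n)).mpr fun m =>
      h n m (Nat.one_le_iff_ne_zero.mpr hn)

section Recurrence

variable {R M : Type*}

theorem eq_of_nsmul_eq_sum_smul_add [Semiring R] [AddCommMonoid M] [Module R M]
    [IsAddTorsionFree M] {p : ℕ → R} {u v b : ℕ → M} (h₀ : u 0 = v 0)
    (hu : ∀ n, n • u n = ∑ j ∈ Finset.Icc 1 n, p j • u (n - j) + b n)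
    (hv : ∀ n, n • v n = ∑ j ∈ Finset.Icc 1 n, p j • v (n - j) + b n) : u = v := by
  funext n
  induction n using Nat.strong_induction_on with
  | _ n ih =>
    obtain rfl | hn := eq_or_ne n 0
    · exact h₀
    refine nsmul_right_injective hn ?_
    simp only [hu, hv]
    congr 1
    refine Finset.sum_congr rfl fun j hj => ?_
    rw [Finset.mem_Icc] at hj
    rw [ih (n - j) (by lia)]

theorem nsmul_sum_smul_eq_sum_smul_add [Semiring R] [AddCommMonoid M] [Module R M]
    {a p : ℕ → R} (ha : ∀ n, n * a n = ∑ j ∈ Finset.Icc 1 n, p j * a (n - j))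
    (l : ℕ → M) (n : ℕ) :
    n • ∑ i ∈ Finset.Icc 1 n, a (n - i) • l i =
      ∑ j ∈ Finset.Icc 1 n, p j • ∑ i ∈ Finset.Icc 1 (n - j), a (n - j - i) • l i +
        ∑ i ∈ Finset.Icc 1 n, a (n - i) • i • l i := by
  have hswap : ∑ j ∈ Finset.Icc 1 n, p j • ∑ i ∈ Finset.Icc 1 (n - j), a (n - j - i) • l i =
      ∑ i ∈ Finset.Icc 1 n, (n - i) • a (n - i) • l i := by
    calc
      ∑ j ∈ Finset.Icc 1 n, p j • ∑ i ∈ Finset.Icc 1 (n - j), a (n - j - i) • l i =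
          ∑ j ∈ Finset.Icc 1 n, ∑ i ∈ Finset.Icc 1 (n - j), (p j * a (n - i - j)) • l i := by
        simp only [Finset.smul_sum, smul_smul, Nat.sub_right_comm]
      _ = ∑ i ∈ Finset.Icc 1 n, ∑ j ∈ Finset.Icc 1 (n - i), (p j * a (n - i - j)) • l i :=
        Finset.sum_comm' fun j i => by simp only [Finset.mem_Icc]; lia
      _ = ∑ i ∈ Finset.Icc 1 n, (n - i) • a (n - i) • l i := by
        refine Finset.sum_congr rfl fun i _ => ?_
        rw [← Finset.sum_smul, ← ha, mul_smul, Nat.cast_smul_eq_nsmul]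
  rw [hswap, ← Finset.sum_add_distrib, Finset.smul_sum]
  refine Finset.sum_congr rfl fun i hi => ?_
  rw [smul_comm (a (n - i)) i, ← add_nsmul, Nat.sub_add_cancel (Finset.mem_Icc.mp hi).2]

theorem nsmul_derivation_eq_sum_smul_add {S : Type*} [CommSemiring S] [CommSemiring R]
    [Algebra S R] [AddCommMonoid M] [Module R M] [Module S M] (D : Derivation S R M)
    {a p : ℕ → R} (ha : ∀ n, n * a n = ∑ j ∈ Finset.Icc 1 n, p j * a (n - j))
    {l : ℕ → M} (hp : ∀ j, 1 ≤ j → D (p j) = j • l j) (n : ℕ) :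
    n • D (a n) = ∑ j ∈ Finset.Icc 1 n, p j • D (a (n - j)) +
      ∑ i ∈ Finset.Icc 1 n, a (n - i) • i • l i := by
  calc
    n • D (a n) = D (∑ j ∈ Finset.Icc 1 n, p j * a (n - j)) := by
      rw [← ha, ← nsmul_eq_mul, map_nsmul]
    _ = ∑ j ∈ Finset.Icc 1 n, (p j • D (a (n - j)) + a (n - j) • D (p j)) := by
      simp only [map_sum, Derivation.leibniz]
    _ = ∑ j ∈ Finset.Icc 1 n, p j • D (a (n - j)) + ∑ i ∈ Finset.Icc 1 n, a (n - i) • i • l i := by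
      rw [Finset.sum_add_distrib]
      congr 1
      exact Finset.sum_congr rfl fun j hj => by rw [hp j (Finset.mem_Icc.mp hj).1]

theorem derivation_eq_sum_smul {S : Type*} [CommSemiring S] [CommSemiring R]
    [Algebra S R] [AddCommMonoid M] [Module R M] [Module S M] [IsAddTorsionFree M]
    (D : Derivation S R M) {a p : ℕ → R} (ha₀ : a 0 = 1)
    (ha : ∀ n, n * a n = ∑ j ∈ Finset.Icc 1 n, p j * a (n - j))
    {l : ℕ → M} (hp : ∀ j, 1 ≤ j → D (p j) = j • l j) (n : ℕ) :
    D (a n) = ∑ i ∈ Finset.Icc 1 n, a (n - i) • l i :=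
  congrFun (eq_of_nsmul_eq_sum_smul_add (by simp [ha₀])
    (nsmul_derivation_eq_sum_smul_add D ha hp) (nsmul_sum_smul_eq_sum_smul_add ha l)) n

end Recurrence

theorem natCast_mul_eq_sum_of_newton {R : Type*} [CommRing R] {a Ψ : ℕ → R} (ha₀ : a 0 = 1)
    (hNewton : ∀ n, 1 ≤ n → Ψ n =
      (∑ i ∈ Finset.Ico 1 n, (-1) ^ (i + 1) * a i * Ψ (n - i)) + (-1) ^ (n + 1) * n * a n)
    (n : ℕ) : n * a n = ∑ j ∈ Finset.Icc 1 n, (-1) ^ (j + 1) * Ψ j * a (n - j) := by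
  obtain rfl | hn := Nat.eq_zero_or_pos n
  · simp
  have hreflect : ∑ i ∈ Finset.Ico 1 n, (-1) ^ (i + 1) * a i * Ψ (n - i) =
      ∑ j ∈ Finset.Ico 1 n, (-1) ^ (n - j + 1) * a (n - j) * Ψ j := by
    have h := Finset.sum_Ico_reflect (fun j => (-1) ^ (n - j + 1) * a (n - j) * Ψ j) 1 n.le_succ
    rw [Nat.add_sub_cancel_left, Nat.add_sub_cancel] at h
    rw [← h]
    refine Finset.sum_congr rfl fun i hi => ?_
    rw [Nat.sub_sub_self (Finset.mem_Ico.mp hi).2.le]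
  have hterm : ∀ j ∈ Finset.Ico 1 n, (-1) ^ (j + 1) * Ψ j * a (n - j) =
      -(-1) ^ (n + 1) * ((-1) ^ (n - j + 1) * a (n - j) * Ψ j) := by
    intro j hj
    obtain ⟨k, rfl⟩ := Nat.exists_eq_add_of_le' (Finset.mem_Ico.mp hj).2.le
    have hk : (-1 : R) ^ k * (-1) ^ k = 1 := by simp [← mul_pow]
    rw [Nat.add_sub_cancel]
    linear_combination (-1) ^ j * Ψ j * a k * hk
  have hsign : (-1 : R) ^ (n + 1) * (-1) ^ (n + 1) = 1 := by simp [← mul_pow]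
  rw [← Finset.Ico_add_one_right_eq_Icc, Finset.sum_Ico_succ_top hn, Finset.sum_congr rfl hterm,
    ← Finset.mul_sum, ← hreflect, Nat.sub_self, ha₀]
  linear_combination -(-1) ^ (n + 1) * hNewton n hn - n * a n * hsign

theorem stmt5_general {R M : Type*} [CommRing R] [AddCommGroup M] [Module R M]
    [IsAddTorsionFree M] (D : Derivation ℤ R M) {lam Ψ : ℕ → R} {Λ : ℕ → M}
    (hlam₀ : lam 0 = 1)
    (hNewton : ∀ ν, 1 ≤ ν → Ψ ν =
      (∑ i ∈ Finset.Ico 1 ν, (-1) ^ (i + 1) * lam i * Ψ (ν - i)) + (-1) ^ (ν + 1) * ν * lam ν)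
    (hΨ : ∀ ν, 1 ≤ ν → D (Ψ ν) = ((-1 : ℤ) ^ (ν + 1) * ν) • Λ ν) (ν : ℕ) :
    D (lam ν) = ∑ i ∈ Finset.Icc 1 ν, lam (ν - i) • Λ i := by
  refine derivation_eq_sum_smul D hlam₀ (natCast_mul_eq_sum_of_newton hlam₀ hNewton) ?_ ν
  intro j hj
  calc
    D ((-1) ^ (j + 1) * Ψ j) = D ((-1 : ℤ) ^ (j + 1) • Ψ j) := by simp [zsmul_eq_mul]
    _ = ((-1 : ℤ) ^ (j + 1) * (-1) ^ (j + 1) * j) • Λ j := by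
      rw [map_zsmul, hΨ j hj, smul_smul, mul_assoc]
    _ = j • Λ j := by simp [← mul_pow]

theorem stmt5 {R M : Type*} [CommRing R] [AddCommGroup M] [Module R M]
    (lam : ℕ → R → R) (Ψ : ℕ → R → R) (Λ : ℕ → M → M) (d : R → M)
    -- `R` is a pre-λ-ring.
    (hlam0 : ∀ r : R, lam 0 r = 1)
    (hlam1 : ∀ r : R, lam 1 r = r)
    (hlamAdd : ∀ i, ∀ r s : R,
      lam i (r + s) = ∑ k ∈ Finset.range (i + 1), lam k r * lam (i - k) s)
    -- The Adams operations are defined recursively by the Newton formula.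
    (hNewton : ∀ ν, 1 ≤ ν → ∀ r : R, Ψ ν r =
      (∑ i ∈ Finset.Ico 1 ν, (-1 : R) ^ (i + 1) * lam i r * Ψ (ν - i) r) +
        (-1 : R) ^ (ν + 1) * (ν : R) * lam ν r)
    -- `M` is ℤ-torsion-free.
    (htf : ∀ (n : ℕ) (m : M), 1 ≤ n → n • m = 0 → m = 0)
    (hΛadd : ∀ i, 1 ≤ i → ∀ m m' : M, Λ i (m + m') = Λ i m + Λ i m')
    (hΛ1 : ∀ m : M, Λ 1 m = m)
    (hΛsmul : ∀ i, 1 ≤ i → ∀ (r : R) (m : M), Λ i (r • m) = Ψ i r • Λ i m)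
    -- `d` is a Ψ-derivation with respect to the Adams operations.
    (hdadd : ∀ r s : R, d (r + s) = d r + d s)
    (hdmul : ∀ r s : R, d (r * s) = r • d s + s • d r)
    (hdPsi : ∀ ν, 1 ≤ ν → ∀ r : R,
      d (Ψ ν r) = ((-1 : ℤ) ^ (ν + 1) * (ν : ℤ)) • Λ ν (d r)) :
    -- Then `d` is a λ-derivation.
    ∀ ν, 1 ≤ ν → ∀ r : R,
      d (lam ν r) = ∑ i ∈ Finset.Icc 1 ν, lam (ν - i) r • Λ i (d r) := by
  have := isAddTorsionFree_of_nsmul_eq_zero htf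
  exact fun ν _ r => stmt5_general (.mk' (AddMonoidHom.mk' d hdadd).toIntLinearMap hdmul) (hlam0 r)
    (fun ν hν => hNewton ν hν r) (fun ν hν => hdPsi ν hν r) ν
end

section
/- Let R be a pre-λ-ring with operations λ^i, let M be an R-module, and let Λ^i : M → M (i ≥ 1) be additive group homomorphisms with Λ^1(m) = m. Define operations λ̃^i on the square-zero extension R ⋊ M by λ̃^0(r,m) = (1,0) and λ̃^i(r,m) = (λ^i(r), Σ_{j=1}^{i} Λ^j(m)·λ^{i−j}(r)) for i ≥ 1. Then the λ̃^i make R ⋊ M into a pre-λ-ring: λ̃^0(x) = (1,0), λ̃^1(x) = x, and λ̃^i(x+y) = Σ_{j=0}^{i} λ̃^j(x)·λ̃^{i−j}(y) for all x,y ∈ R ⋊ M and all i ≥ 0. -/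
/-- The operations of the semidirect product `R ⋊_λ M`:
`λ̃^0(r,m) = (1,0)` and `λ̃^i(r,m) = (λ^i(r), Σ_{j=1}^{i} Λ^j(m)·λ^{i−j}(r))` for `i ≥ 1`. -/
def lamSd {R M : Type*} [CommRing R] [AddCommGroup M] [Module R M]
    (lam : ℕ → R → R) (Λ : ℕ → M → M) (i : ℕ) (x : R × M) : R × M :=
  if i = 0 then ((1 : R), (0 : M))
  else (lam i x.1, ∑ j ∈ Finset.Icc 1 i, lam (i - j) x.1 • Λ j x.2)

/-! Collect the operations into generating series `λ_t(r) = ∑ λ^i(r) t^i` and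
`Λ_t(m) = ∑_{i ≥ 1} Λ^i(m) t^i`. The addition formula for a family of operations says exactly that
its generating series turns sums into products. In `(R ⋊ M)⟦t⟧` one has
`λ̃_t(r, m) = λ_t(r) (1 + Λ_t(m))`. The first factor turns sums into products because `R` is a
pre-λ-ring, and so does the second because `Λ_t` is additive and its values multiply to zero. -/

open Finset PowerSeries TrivSqZeroExt

section OpSeries

variable {A B : Type*} [Semiring B]

/-- The generating series `∑ op^i(a) t^i` of a family of operations; for the operations of a
pre-λ-ring this is the usual `λ_t(a)`. -/
def opSeries (op : ℕ → A → B) (a : A) : B⟦X⟧ :=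
  PowerSeries.mk fun i => op i a

theorem coeff_opSeries (op : ℕ → A → B) (a : A) (i : ℕ) : coeff i (opSeries op a) = op i a :=
  coeff_mk i _

theorem opSeries_add_eq_mul_iff [Add A] (op : ℕ → A → B) (a b : A) :
    opSeries op (a + b) = opSeries op a * opSeries op b ↔
      ∀ i, op i (a + b) = ∑ j ∈ range (i + 1), op j a * op (i - j) b := by
  simp only [PowerSeries.ext_iff, coeff_mul, coeff_opSeries,
    Nat.sum_antidiagonal_eq_sum_range_succ fun j k => op j a * op k b]

end OpSeries

section InrSeries

variable (R : Type*) {M : Type*} [CommSemiring R] [AddCommMonoid M] [Module R M]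
  [Module Rᵐᵒᵖ M] [IsCentralScalar R M]

/-- The embedding of `M⟦t⟧` in `(R ⋊ M)⟦t⟧`, with the elements of `M⟦t⟧` encoded as their sequences
of coefficients. As there is no `Λ^0`, the series `Λ_t(m)` is written
`X * inrSeries R fun j => Λ (j + 1) m`. -/
def inrSeries : (ℕ → M) →+ (TrivSqZeroExt R M)⟦X⟧ where
  toFun c := PowerSeries.mk fun i => inr (c i)
  map_zero' := by ext1; simp
  map_add' c d := by ext1; simp

theorem coeff_inrSeries (c : ℕ → M) (i : ℕ) : coeff i (inrSeries R c) = inr (c i) :=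
  coeff_mk i fun i => inr (c i)

theorem inrSeries_mul_inrSeries (c d : ℕ → M) : inrSeries R c * inrSeries R d = 0 := by
  ext1 i
  simp only [coeff_mul, coeff_inrSeries, inr_mul_inr, sum_const_zero, map_zero]

theorem one_add_X_mul_inrSeries_add (c d : ℕ → M) :
    1 + X * inrSeries R (c + d) = (1 + X * inrSeries R c) * (1 + X * inrSeries R d) :=
  calc 1 + X * inrSeries R (c + d)
    _ = 1 + X * (inrSeries R c + inrSeries R d) + X ^ 2 * (inrSeries R c * inrSeries R d) := by
      rw [map_add, inrSeries_mul_inrSeries, mul_zero, add_zero]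
    _ = (1 + X * inrSeries R c) * (1 + X * inrSeries R d) := by ring

variable {R}

theorem coeff_map_inlHom (φ : R⟦X⟧) (i : ℕ) :
    coeff i (PowerSeries.map (inlHom R M) φ) = inl (coeff i φ) :=
  coeff_map (inlHom R M) i φ

theorem coeff_zero_map_inlHom_mul_one_add_X_mul_inrSeries (φ : R⟦X⟧) (c : ℕ → M) :
    coeff 0 (PowerSeries.map (inlHom R M) φ * (1 + X * inrSeries R c)) = inl (coeff 0 φ) := by
  rw [mul_add, mul_one, mul_left_comm, map_add, coeff_zero_X_mul, add_zero, coeff_map_inlHom]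

theorem coeff_succ_map_inlHom_mul_one_add_X_mul_inrSeries (φ : R⟦X⟧) (c : ℕ → M) (n : ℕ) :
    coeff (n + 1) (PowerSeries.map (inlHom R M) φ * (1 + X * inrSeries R c)) =
      inl (coeff (n + 1) φ) + inr (∑ p ∈ antidiagonal n, coeff p.1 φ • c p.2) := by
  rw [mul_add, mul_one, mul_left_comm, map_add, coeff_succ_X_mul, coeff_map_inlHom]
  simp only [coeff_mul, coeff_map_inlHom, coeff_inrSeries, inl_mul_inr, inr_sum]

end InrSeries

theorem sum_Icc_one_succ_eq_sum_antidiagonal {M : Type*} [AddCommMonoid M]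
    (f : ℕ → ℕ → M) (n : ℕ) :
    ∑ j ∈ Icc 1 (n + 1), f (n + 1 - j) j = ∑ p ∈ antidiagonal n, f p.1 (p.2 + 1) :=
  calc ∑ j ∈ Icc 1 (n + 1), f (n + 1 - j) j
    _ = ∑ j ∈ range (n + 1), f (n - j) (j + 1) := by
      rw [← Ico_add_one_right_eq_Icc, sum_Ico_eq_sum_range]
      simp only [Nat.add_sub_cancel, add_comm 1, Nat.add_sub_add_right]
    _ = ∑ p ∈ antidiagonal n, f p.2 (p.1 + 1) :=
      (Nat.sum_antidiagonal_eq_sum_range_succ (fun j k => f k (j + 1)) n).symm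
    _ = ∑ p ∈ antidiagonal n, f p.1 (p.2 + 1) :=
      Nat.sum_antidiagonal_swap (f := fun p => f p.1 (p.2 + 1))

/-- The identification of `R × M`, on which `sqMul` and `lamSd` are defined, with the type
`TrivSqZeroExt R M`, which carries the ring structure of `R ⋊ M`. -/
def prodEquivTrivSqZeroExt (R M : Type*) [AddZeroClass R] [AddZeroClass M] :
    R × M ≃+ TrivSqZeroExt R M where
  toFun x := inl x.1 + inr x.2
  invFun z := (z.fst, z.snd)
  left_inv x := by simp
  right_inv z := inl_fst_add_inr_snd_eq z
  map_add' x y := by ext <;> simp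

theorem prodEquivTrivSqZeroExt_apply {R M : Type*} [AddZeroClass R] [AddZeroClass M] (x : R × M) :
    prodEquivTrivSqZeroExt R M x = inl x.1 + inr x.2 :=
  rfl

theorem prodEquivTrivSqZeroExt_sqMul {R M : Type*} [CommRing R] [AddCommGroup M] [Module R M]
    [Module Rᵐᵒᵖ M] [IsCentralScalar R M] (x y : R × M) :
    prodEquivTrivSqZeroExt R M (sqMul x y) =
      prodEquivTrivSqZeroExt R M x * prodEquivTrivSqZeroExt R M y := by
  ext <;> simp [prodEquivTrivSqZeroExt_apply, sqMul]

section LamSd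

variable {R M : Type*} [CommRing R] [AddCommGroup M] [Module R M]
  {lam : ℕ → R → R} {Λ : ℕ → M → M}

theorem lamSd_zero (lam : ℕ → R → R) (Λ : ℕ → M → M) (x : R × M) : lamSd lam Λ 0 x = (1, 0) :=
  if_pos rfl

theorem lamSd_succ (lam : ℕ → R → R) (Λ : ℕ → M → M) (n : ℕ) (x : R × M) :
    lamSd lam Λ (n + 1) x =
      (lam (n + 1) x.1, ∑ p ∈ antidiagonal n, lam p.1 x.1 • Λ (p.2 + 1) x.2) := by
  rw [lamSd, if_neg n.succ_ne_zero,
    sum_Icc_one_succ_eq_sum_antidiagonal fun i j => lam i x.1 • Λ j x.2]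

theorem lamSd_one (hlam0 : ∀ r, lam 0 r = 1) (hlam1 : ∀ r, lam 1 r = r) (hΛ1 : ∀ m, Λ 1 m = m)
    (x : R × M) : lamSd lam Λ 1 x = x := by
  simp [lamSd_succ, hlam0, hlam1, hΛ1]

/-- The generating series `λ̃_t(x)` of the operations of `R ⋊_λ M`, as a power series over the ring
`R ⋊ M`. -/
def lamSdSeries (lam : ℕ → R → R) (Λ : ℕ → M → M) : R × M → (TrivSqZeroExt R M)⟦X⟧ :=
  opSeries fun i x => prodEquivTrivSqZeroExt R M (lamSd lam Λ i x)

section CentralScalar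

variable [Module Rᵐᵒᵖ M] [IsCentralScalar R M]

theorem lamSdSeries_eq_mul (Λ : ℕ → M → M) (hlam0 : ∀ r, lam 0 r = 1) (x : R × M) :
    lamSdSeries lam Λ x =
      PowerSeries.map (inlHom R M) (opSeries lam x.1) *
        (1 + X * inrSeries R fun j => Λ (j + 1) x.2) := by
  ext1 i
  rw [lamSdSeries, coeff_opSeries, prodEquivTrivSqZeroExt_apply]
  cases i with
  | zero =>
    rw [lamSd_zero, coeff_zero_map_inlHom_mul_one_add_X_mul_inrSeries, coeff_opSeries, hlam0,
      inr_zero, add_zero]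
  | succ n =>
    simp only [lamSd_succ, coeff_succ_map_inlHom_mul_one_add_X_mul_inrSeries, coeff_opSeries]

theorem lamSdSeries_add (hlam0 : ∀ r, lam 0 r = 1)
    (hlam : ∀ r s, opSeries lam (r + s) = opSeries lam r * opSeries lam s)
    (hΛ : ∀ i, 1 ≤ i → ∀ m m', Λ i (m + m') = Λ i m + Λ i m') (x y : R × M) :
    lamSdSeries lam Λ (x + y) = lamSdSeries lam Λ x * lamSdSeries lam Λ y := by
  have hΛ_succ : (fun j => Λ (j + 1) (x + y).2) =
      (fun j => Λ (j + 1) x.2) + fun j => Λ (j + 1) y.2 :=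
    funext fun j => hΛ (j + 1) j.succ_pos x.2 y.2
  simp only [lamSdSeries_eq_mul Λ hlam0]
  rw [Prod.fst_add, hlam, map_mul, hΛ_succ, one_add_X_mul_inrSeries_add, mul_mul_mul_comm]

end CentralScalar

theorem lamSd_add (hlam0 : ∀ r, lam 0 r = 1)
    (hlam : ∀ r s, opSeries lam (r + s) = opSeries lam r * opSeries lam s)
    (hΛ : ∀ i, 1 ≤ i → ∀ m m', Λ i (m + m') = Λ i m + Λ i m') (i : ℕ) (x y : R × M) :
    lamSd lam Λ i (x + y) =
      ∑ j ∈ range (i + 1), sqMul (lamSd lam Λ j x) (lamSd lam Λ (i - j) y) := by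
  -- The ring structure on `TrivSqZeroExt R M` needs `M` to be a bimodule.
  let : Module Rᵐᵒᵖ M := Module.compHom M ((RingHom.id R).fromOpposite mul_comm)
  have : IsCentralScalar R M := ⟨fun _ _ => rfl⟩
  apply (prodEquivTrivSqZeroExt R M).injective
  simp only [map_sum, prodEquivTrivSqZeroExt_sqMul]
  exact (opSeries_add_eq_mul_iff _ x y).mp (lamSdSeries_add hlam0 hlam hΛ x y) i

end LamSd

theorem stmt7 {R M : Type*} [CommRing R] [AddCommGroup M] [Module R M]
    (lam : ℕ → R → R) (Λ : ℕ → M → M)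
    -- `R` is a pre-λ-ring.
    (hlam0 : ∀ r : R, lam 0 r = 1)
    (hlam1 : ∀ r : R, lam 1 r = r)
    (hlamAdd : ∀ i, ∀ r s : R,
      lam i (r + s) = ∑ k ∈ Finset.range (i + 1), lam k r * lam (i - k) s)
    (hΛadd : ∀ i, 1 ≤ i → ∀ m m' : M, Λ i (m + m') = Λ i m + Λ i m')
    (hΛ1 : ∀ m : M, Λ 1 m = m) :
    -- Then the `λ̃^i` make `R ⋊ M` into a pre-λ-ring.
    (∀ x : R × M, lamSd lam Λ 0 x = ((1 : R), (0 : M))) ∧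
    (∀ x : R × M, lamSd lam Λ 1 x = x) ∧
    (∀ i, ∀ x y : R × M,
      lamSd lam Λ i (x + y) =
        ∑ j ∈ Finset.range (i + 1), sqMul (lamSd lam Λ j x) (lamSd lam Λ (i - j) y)) := by
  have opSeries_lam_add (r s : R) : opSeries lam (r + s) = opSeries lam r * opSeries lam s :=
    (opSeries_add_eq_mul_iff lam r s).mpr fun i => hlamAdd i r s
  exact ⟨lamSd_zero lam Λ, lamSd_one hlam0 hlam1 hΛ1, lamSd_add hlam0 opSeries_lam_add hΛadd⟩
end

section
/- Let n be a positive integer. If 2^n divides l^{2n} − l^n for every integer l ≥ 2 (equivalently, if 2^n divides the greatest common divisor G_{n,2n} of the set { l^{2n} − l^n : l ∈ ℤ, l ≥ 2 }), then n = 1, n = 2, or n = 4. -/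
/-!
Since `l ^ (2 * n) - l ^ n = l ^ n * (l ^ n - 1)`, for odd `l` the hypothesis says that `2 ^ n`
divides `l ^ n - 1`, and a single `l ≡ ±3 (mod 8)`, such as `l = 3`, already decides the matter.
For odd `n` the 2-adic valuation of `l ^ n - 1` is that of `l - 1`, at most `2`, which forces
`n = 1`. For even `n`, lifting the exponent from `l ^ 2 - 1`, of valuation `3`, shows that
`l ^ n - 1` has the valuation of `4 * n`, and `2 ^ n ≤ 4 * n` only for `n ≤ 4`.
-/

theorem dvd_pow_two_mul_sub_pow_iff {R : Type*} [CommRing R] {a l : R} (h : IsCoprime a l)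
    (n : ℕ) : a ∣ l ^ (2 * n) - l ^ n ↔ a ∣ l ^ n - 1 := by
  have factor : l ^ (2 * n) - l ^ n = l ^ n * (l ^ n - 1) := by ring
  rw [factor]
  exact ⟨h.pow_right.dvd_of_dvd_mul_left, fun hdvd => hdvd.mul_left _⟩

theorem two_pow_dvd_pow_sub_one_iff_of_odd {l : ℤ} (hl : Odd l) {n : ℕ} (hn : Odd n) (k : ℕ) :
    2 ^ k ∣ l ^ n - 1 ↔ 2 ^ k ∣ l - 1 := by
  have two_dvd_sub : 2 ∣ l - 1 := (hl.sub_odd odd_one).two_dvd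
  have two_not_dvd_n : ¬(2 : ℤ) ∣ n := by exact_mod_cast hn.not_two_dvd_nat
  have lifting := emultiplicity_pow_sub_pow_of_prime Int.prime_two two_dvd_sub
    (Int.two_dvd_ne_zero.mpr (Int.odd_iff.mp hl)) two_not_dvd_n
  rw [one_pow] at lifting
  rw [pow_dvd_iff_le_emultiplicity, pow_dvd_iff_le_emultiplicity, lifting]

theorem emultiplicity_two_pow_sub_one_of_even {l : ℤ} (hl : Odd l) {n : ℕ} (hn : Even n) :
    emultiplicity 2 (l ^ n - 1) + 1 = emultiplicity 2 (l ^ 2 - 1) + emultiplicity 2 (n : ℤ) := by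
  have two_dvd_sub : 2 ∣ l - 1 := (hl.sub_odd odd_one).two_dvd
  have lifting := Int.two_pow_sub_pow two_dvd_sub
    (Int.two_dvd_ne_zero.mpr (Int.odd_iff.mp hl)) hn
  rwa [← emultiplicity_mul Int.prime_two, ← sq_sub_sq, one_pow, one_pow] at lifting

theorem emultiplicity_two_sq_sub_one {l : ℤ} (hl : l % 8 = 3 ∨ l % 8 = 5) :
    emultiplicity 2 (l ^ 2 - 1) = 3 := by
  have sq_mod : l ^ 2 % 16 = 9 := by
    have hl16 : l % 16 = 3 ∨ l % 16 = 5 ∨ l % 16 = 11 ∨ l % 16 = 13 := by omega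
    rcases hl16 with h | h | h | h <;> simp [pow_two, Int.mul_emod, h]
  exact (emultiplicity_eq_coe (n := 3)).mpr ⟨by omega, by omega⟩

theorem two_pow_dvd_pow_sub_one_iff_of_even {l : ℤ} (hl : l % 8 = 3 ∨ l % 8 = 5) {n : ℕ}
    (hn : Even n) (k : ℕ) : 2 ^ k ∣ l ^ n - 1 ↔ 2 ^ k ∣ 4 * n := by
  have hodd : Odd l := Int.odd_iff.mpr (by omega)
  have emultiplicity_four : emultiplicity (2 : ℤ) 4 = 2 :=
    (emultiplicity_eq_coe (n := 2)).mpr ⟨by norm_num, by norm_num⟩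
  have emultiplicity_eq : emultiplicity 2 (l ^ n - 1) = emultiplicity 2 (4 * n : ℤ) := by
    refine ENat.add_left_injective_of_ne_top ENat.one_ne_top ?_
    calc
      emultiplicity 2 (l ^ n - 1) + 1 = 3 + emultiplicity 2 (n : ℤ) := by
        rw [emultiplicity_two_pow_sub_one_of_even hodd hn, emultiplicity_two_sq_sub_one hl]
      _ = emultiplicity 2 (4 * n : ℤ) + 1 := by
        rw [emultiplicity_mul Int.prime_two, emultiplicity_four, add_right_comm,
          two_add_one_eq_three]
  rw [pow_dvd_iff_le_emultiplicity, emultiplicity_eq, ← pow_dvd_iff_le_emultiplicity]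
  norm_cast

theorem four_mul_lt_two_pow {n : ℕ} (hn : 5 ≤ n) : 4 * n < 2 ^ n := by
  induction n, hn using Nat.le_induction with
  | base => norm_num
  | succ n hn ih => rw [pow_succ]; omega

theorem stmt16_general {n : ℕ} (hn : 1 ≤ n) {l : ℤ} (hl : l % 8 = 3 ∨ l % 8 = 5)
    (h : 2 ^ n ∣ l ^ (2 * n) - l ^ n) : n = 1 ∨ n = 2 ∨ n = 4 := by
  have hodd : Odd l := Int.odd_iff.mpr (by omega)
  have coprime : IsCoprime (2 ^ n) l := (Int.isCoprime_two_left.mpr hodd).pow_left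
  have dvd_sub_one : 2 ^ n ∣ l ^ n - 1 := (dvd_pow_two_mul_sub_pow_iff coprime n).mp h
  rcases Nat.even_or_odd n with even_n | odd_n
  · have dvd_four_mul : 2 ^ n ∣ 4 * n :=
      (two_pow_dvd_pow_sub_one_iff_of_even hl even_n n).mp dvd_sub_one
    have two_pow_le : 2 ^ n ≤ 4 * n := Nat.le_of_dvd (by omega) dvd_four_mul
    have n_lt : n < 5 := lt_of_not_ge fun five_le => (four_mul_lt_two_pow five_le).not_ge two_pow_le
    grind
  · have dvd_sub : 2 ^ n ∣ l - 1 :=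
      (two_pow_dvd_pow_sub_one_iff_of_odd hodd odd_n n).mp dvd_sub_one
    have n_lt : n < 3 := by
      by_contra! three_le
      have eight_dvd : 2 ^ 3 ∣ l - 1 := (pow_dvd_pow 2 three_le).trans dvd_sub
      omega
    grind

theorem stmt16 (n : ℕ) (hn : 1 ≤ n)
    (h : ∀ l : ℤ, 2 ≤ l → (2 : ℤ) ^ n ∣ l ^ (2 * n) - l ^ n) :
    n = 1 ∨ n = 2 ∨ n = 4 :=
  stmt16_general hn (l := 3) (by norm_num) (h 3 (by norm_num))
end

section
/- Let k and n be positive integers with n > k + 1. Then for every integer d, d divides l^{n+k} − l^n for every integer l ≥ 2 if and only if d divides l^{n+k+1} − l^{n+1} for every integer l ≥ 2. Consequently the greatest common divisors satisfy G_{n,n+k} = G_{n+1,n+k+1}. -/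
/-!
Write `l ^ (n + k) - l ^ n = l ^ n * (l ^ k - 1)` and compare common divisors one prime power
`p ^ e` at a time. If `p ∤ l`, the power of `l` does not matter. If `p ∣ l`, the factor `l ^ n`
absorbs `p ^ e` as soon as `e ≤ n`. That bound comes from the single value `l = 1 + p ^ 2`, which
is prime to `p` and has order `p ^ m` modulo `p ^ (m + 2)`, for `p = 2` as well: if `p ^ (n + 1)`
divides `l ^ k - 1`, then `p ^ (n - 1) ∣ k`, which is impossible when `0 < k < 2 ^ (n - 1)`.
-/

theorem int_dvd_iff_forall_prime_pow_dvd {a b : ℤ} :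
    a ∣ b ↔ ∀ p e : ℕ, p.Prime → (p : ℤ) ^ e ∣ a → (p : ℤ) ^ e ∣ b := by
  simp only [← Nat.cast_pow, Int.natCast_dvd]
  rw [← Int.natAbs_dvd_natAbs, Nat.dvd_iff_prime_pow_dvd_dvd]

theorem prime_pow_dvd_pow_mul_of_le {M : Type*} [CommMonoidWithZero M] [IsCancelMulZero M]
    {p a b : M} (hp : Prime p) {e m n : ℕ} (hen : e ≤ n) (h : p ^ e ∣ a ^ m * b) :
    p ^ e ∣ a ^ n * b := by
  by_cases hpa : p ∣ a
  · exact ((pow_dvd_pow p hen).trans (pow_dvd_pow_of_dvd hpa n)).mul_right b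
  · exact (hp.pow_dvd_of_dvd_mul_left e (mt hp.dvd_of_dvd_pow hpa) h).mul_left (a ^ n)

theorem prime_pow_dvd_one_add_sq_pow_sub_one_iff {p : ℕ} (hp : p.Prime) (m k : ℕ) :
    (p : ℤ) ^ (m + 2) ∣ (1 + (p : ℤ) ^ 2) ^ k - 1 ↔ p ^ m ∣ k := by
  have orderOf_eq : orderOf (1 + (p : ZMod (p ^ (m + 2))) ^ 2) = p ^ m := by
    simpa only [Int.cast_one, mul_one] using
      ZMod.orderOf_one_add_mul_prime_pow hp 2 two_ne_zero (Nat.mul_le_mul_right 2 hp.two_le) 1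
        (Nat.prime_iff_prime_int.1 hp).not_dvd_one m
  rw [← orderOf_eq, orderOf_dvd_iff_pow_eq_one, ← sub_eq_zero, ← Nat.cast_pow,
    ← ZMod.intCast_zmod_eq_zero_iff_dvd]
  push_cast
  rfl

theorem le_of_prime_pow_dvd_one_add_sq_pow_sub_one {p k n e : ℕ} (hp : p.Prime) (hk : k ≠ 0)
    (hkn : 2 * k < 2 ^ n) (h : (p : ℤ) ^ e ∣ (1 + (p : ℤ) ^ 2) ^ k - 1) : e ≤ n := by
  by_contra! hne
  obtain ⟨m, rfl⟩ : ∃ m, n = m + 1 :=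
    Nat.exists_eq_succ_of_ne_zero (by rintro rfl; omega)
  have hdvd : p ^ m ∣ k :=
    (prime_pow_dvd_one_add_sq_pow_sub_one_iff hp m k).1 ((pow_dvd_pow _ hne).trans h)
  have hle : 2 ^ m ≤ k :=
    (Nat.pow_le_pow_left hp.two_le m).trans (Nat.le_of_dvd (Nat.pos_of_ne_zero hk) hdvd)
  omega

theorem dvd_pow_mul_of_forall_dvd_pow_mul {k n m : ℕ} (hk : k ≠ 0) (hkn : 2 * k < 2 ^ n) {d : ℤ}
    (h : ∀ l : ℤ, 2 ≤ l → d ∣ l ^ m * (l ^ k - 1)) {l : ℤ} (hl : 2 ≤ l) :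
    d ∣ l ^ n * (l ^ k - 1) := by
  refine int_dvd_iff_forall_prime_pow_dvd.2 fun p e hp hpe ↦ ?_
  have hp' : Prime (p : ℤ) := Nat.prime_iff_prime_int.1 hp
  have two_le : 2 ≤ 1 + (p : ℤ) ^ 2 := by
    have := pow_pos (Int.natCast_pos.2 hp.pos) 2
    omega
  have not_dvd : ¬ (p : ℤ) ∣ (1 + (p : ℤ) ^ 2) ^ m := fun hdvd ↦
    hp'.not_dvd_one <|
      (dvd_add_left (dvd_pow_self _ two_ne_zero)).1 (hp'.dvd_of_dvd_pow hdvd)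
  have hen : e ≤ n := le_of_prime_pow_dvd_one_add_sq_pow_sub_one hp hk hkn <|
    hp'.pow_dvd_of_dvd_mul_left e not_dvd (hpe.trans (h _ two_le))
  exact prime_pow_dvd_pow_mul_of_le hp' hen (hpe.trans (h l hl))

theorem forall_dvd_pow_sub_pow_iff_succ {k n : ℕ} (hkn : 2 * k < 2 ^ n) (d : ℤ) :
    (∀ l : ℤ, 2 ≤ l → d ∣ l ^ (n + k) - l ^ n) ↔
      ∀ l : ℤ, 2 ≤ l → d ∣ l ^ (n + k + 1) - l ^ (n + 1) := by
  rcases eq_or_ne k 0 with rfl | hk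
  · simp only [add_zero, sub_self]
  refine ⟨fun h l hl ↦ ?_, fun h l hl ↦ ?_⟩
  · rw [pow_succ, pow_succ, ← sub_mul]
    exact (h l hl).mul_right l
  · simp only [add_right_comm n k 1, pow_add _ _ k, ← mul_sub_one] at h ⊢
    exact dvd_pow_mul_of_forall_dvd_pow_mul hk hkn h hl

theorem two_mul_lt_two_pow_of_succ_lt {k n : ℕ} (h : k + 1 < n) : 2 * k < 2 ^ n :=
  calc 2 * k < 2 * 2 ^ k := Nat.mul_lt_mul_of_pos_left Nat.lt_two_pow_self two_pos
    _ = 2 ^ (k + 1) := (pow_succ' 2 k).symm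
    _ ≤ 2 ^ n := Nat.pow_le_pow_right two_pos h.le

theorem stmt17_general {k n : ℕ} (hkn : 2 * k < 2 ^ n) :
    (∀ d : ℤ,
      (∀ l : ℤ, 2 ≤ l → d ∣ l ^ (n + k) - l ^ n) ↔
        (∀ l : ℤ, 2 ≤ l → d ∣ l ^ (n + k + 1) - l ^ (n + 1))) ∧
    (∀ G G' : ℤ, 0 ≤ G → 0 ≤ G' →
      (∀ d : ℤ, (d ∣ G ↔ ∀ l : ℤ, 2 ≤ l → d ∣ l ^ (n + k) - l ^ n)) →
      (∀ d : ℤ, (d ∣ G' ↔ ∀ l : ℤ, 2 ≤ l → d ∣ l ^ (n + k + 1) - l ^ (n + 1))) →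
      G = G') := by
  refine ⟨forall_dvd_pow_sub_pow_iff_succ hkn, fun G G' hG hG' h h' ↦ ?_⟩
  have same_divisors (d : ℤ) : d ∣ G ↔ d ∣ G' :=
    (h d).trans <| (forall_dvd_pow_sub_pow_iff_succ hkn d).trans (h' d).symm
  exact Int.dvd_antisymm hG hG' ((same_divisors G).1 dvd_rfl) ((same_divisors G').2 dvd_rfl)

theorem stmt17 (k n : ℕ) (hk : 1 ≤ k) (hn : k + 1 < n) :
    -- for every integer `d`, `d` divides all `l^{n+k} − l^n` (l ≥ 2) iff it divides
    -- all `l^{n+k+1} − l^{n+1}` (l ≥ 2) …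
    (∀ d : ℤ,
      (∀ l : ℤ, 2 ≤ l → d ∣ l ^ (n + k) - l ^ n) ↔
        (∀ l : ℤ, 2 ≤ l → d ∣ l ^ (n + k + 1) - l ^ (n + 1))) ∧
    -- … consequently the greatest common divisors agree: `G_{n,n+k} = G_{n+1,n+k+1}`.
    (∀ G G' : ℤ, 0 ≤ G → 0 ≤ G' →
      (∀ d : ℤ, (d ∣ G ↔ ∀ l : ℤ, 2 ≤ l → d ∣ l ^ (n + k) - l ^ n)) →
      (∀ d : ℤ, (d ∣ G' ↔ ∀ l : ℤ, 2 ≤ l → d ∣ l ^ (n + k + 1) - l ^ (n + 1))) →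
      G = G') :=
  stmt17_general (two_mul_lt_two_pow_of_succ_lt hn)
end

section
/- Fix positive integers n and n' and a family of integers ν_k (k ≥ 1), and for each k ≥ 1 define the map Ψ^k : ℤ × ℤ → ℤ × ℤ by Ψ^k(m, r) = (k^{n'}·m + ν_k·r, k^n·r). If Ψ^k ∘ Ψ^l = Ψ^{kl} for all k, l ≥ 1, then ν_l·(k^{n'} − k^n) = ν_k·(l^{n'} − l^n) for all k, l ≥ 1. -/
/-- The map `Ψ^k(m, r) = (k^{n'}·m + ν_k·r, k^n·r)` on `ℤ × ℤ`. -/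
def PsiK (n n' : ℕ) (ν : ℕ → ℤ) (k : ℕ) (x : ℤ × ℤ) : ℤ × ℤ :=
  ((k : ℤ) ^ n' * x.1 + ν k * x.2, (k : ℤ) ^ n * x.2)

/-- The map of `R × R` with matrix `!![a, v; 0, b]`: the shape of an endomorphism that preserves
the first summand `R × 0`, as every `Ψ^k` does. It is kept on pairs, rather than on `Fin 2 → R`,
so that `PsiK` is definitionally an instance. -/
def upperTriangularMap {R : Type*} [Semiring R] (a v b : R) (x : R × R) : R × R :=
  (a * x.1 + v * x.2, b * x.2)

theorem upperTriangularMap_comp {R : Type*} [Semiring R] {a v b a' v' b' : R} :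
    upperTriangularMap a v b ∘ upperTriangularMap a' v' b' =
      upperTriangularMap (a * a') (a * v' + v * b') (b * b') := by
  funext x
  simp only [Function.comp_apply, upperTriangularMap, mul_add, add_mul, mul_assoc, add_assoc]

theorem upperTriangularMap_inj {R : Type*} [Semiring R] {a v b a' v' b' : R} :
    upperTriangularMap a v b = upperTriangularMap a' v' b' ↔ a = a' ∧ v = v' ∧ b = b' := by
  refine ⟨fun h ↦ ?_, by rintro ⟨rfl, rfl, rfl⟩; rfl⟩
  have h₁ : (a, 0) = (a', 0) := by simpa [upperTriangularMap] using congrFun h (1, 0)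
  have h₂ : (v, b) = (v', b') := by simpa [upperTriangularMap] using congrFun h (0, 1)
  exact ⟨congrArg Prod.fst h₁, Prod.mk.inj h₂⟩

theorem commute_upperTriangularMap_iff {R : Type*} [CommRing R] {a v b a' v' b' : R} :
    Function.Commute (upperTriangularMap a v b) (upperTriangularMap a' v' b') ↔
      v' * (a - b) = v * (a' - b') := by
  have corner_eq_iff :
      a * v' + v * b' = a' * v + v' * b ↔ v' * (a - b) = v * (a' - b') := by
    constructor <;> intro h <;> linear_combination h
  rw [Function.Commute, Function.semiconj_iff_comp_eq, upperTriangularMap_comp,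
    upperTriangularMap_comp, upperTriangularMap_inj, corner_eq_iff]
  exact ⟨fun h ↦ h.2.1, fun h ↦ ⟨mul_comm a a', h, mul_comm b b'⟩⟩

theorem stmt19_general {S R : Type*} [CommMagma S] [CommRing R] (a v b : S → R)
    (h : ∀ k l x, upperTriangularMap (a k) (v k) (b k) (upperTriangularMap (a l) (v l) (b l) x) =
      upperTriangularMap (a (k * l)) (v (k * l)) (b (k * l)) x) (k l : S) :
    v l * (a k - b k) = v k * (a l - b l) :=
  commute_upperTriangularMap_iff.1 fun x ↦ by rw [h k l, h l k, mul_comm k l]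

theorem stmt19 (n n' : ℕ) (hn : 1 ≤ n) (hn' : 1 ≤ n') (ν : ℕ → ℤ)
    (h : ∀ k : ℕ, 1 ≤ k → ∀ l : ℕ, 1 ≤ l → ∀ x : ℤ × ℤ,
      PsiK n n' ν k (PsiK n n' ν l x) = PsiK n n' ν (k * l) x) :
    ∀ k : ℕ, 1 ≤ k → ∀ l : ℕ, 1 ≤ l →
      ν l * ((k : ℤ) ^ n' - (k : ℤ) ^ n) = ν k * ((l : ℤ) ^ n' - (l : ℤ) ^ n) :=
  fun k hk l hl ↦ stmt19_general (S := ℕ+) (fun k ↦ (k : ℤ) ^ n') (fun k ↦ ν k)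
    (fun k ↦ (k : ℤ) ^ n) (fun k l x ↦ h k k.pos l l.pos x) ⟨k, hk⟩ ⟨l, hl⟩
end
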